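/- Let p, q ≥ 2 be integers such that p^r = q^s for some positive integers r and s. Then a real number x ∈ [0,1) is normal to base p if and only if it is normal to base q (Schmidt, part 1). -/

import Mathlib

open Filter MeasureTheory Topology
open scoped Classical

/-- The `(n+1)`-st digit (i.e. `ε_{n+1}`, `0`-indexed by `n`) of the base-`q` expansion of `x`,
chosen as the greedy expansion (never eventually equal to `q - 1`). -/
noncomputable def qdigit (q : ℕ) (x : ℝ) (n : ℕ) : ℕ :=
  (⌊x * (q : ℝ) ^ (n + 1)⌋).toNat % q

/-- `x` is normal to base `q`: every word `d` of length `m ≥ 1` over `{0, …, q-1}` occurs in the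
base-`q` digit sequence of `x` with frequency `q^{-m}`. -/
def IsNormal (q : ℕ) (x : ℝ) : Prop :=
  ∀ m : ℕ, 0 < m → ∀ d : Fin m → ℕ, (∀ i, d i < q) →
    Tendsto
      (fun N : ℕ =>
        (((Finset.range N).filter fun n =>
          ∀ i : Fin m, qdigit q x (n + (i : ℕ)) = d i).card : ℝ) / N)
      atTop (𝓝 (((q : ℝ) ^ m)⁻¹))

/-! ### Digits and cells -/

lemma digits_eq_iff (q : ℕ) (hq : 2 ≤ q) (m : ℕ) : ∀ Y A : ℕ, A < q ^ m →
    ((∀ i < m, Y / q ^ i % q = A / q ^ i % q) ↔ Y % q ^ m = A) := by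
  induction m with
  | zero => intro Y A hA; simp at hA; simp [hA, Nat.mod_one]
  | succ m ih =>
    intro Y A hA
    have hA' : A / q < q ^ m := by
      rw [Nat.div_lt_iff_lt_mul (by omega)]; rwa [pow_succ] at hA
    have h1 := ih (Y / q) (A / q) hA'
    have h2 : Y % q ^ (m + 1) = Y % q + q * (Y / q % q ^ m) := by
      rw [pow_succ', Nat.mod_mul]
    have h3 := Nat.mod_add_div A q
    constructor
    · intro h
      have h4 : Y / q % q ^ m = A / q := by
        apply h1.1
        intro i hi
        have := h (i + 1) (by omega)
        rwa [pow_succ', ← Nat.div_div_eq_div_mul, ← Nat.div_div_eq_div_mul] at this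
      have h5 := h 0 (by omega)
      simp at h5
      rw [h2, h4, h5, h3]
    · intro h i hi
      have hA2 : A % q ^ (m + 1) = A := Nat.mod_eq_of_lt hA
      have h6 : Y % q = A % q := by
        rw [← h, Nat.mod_mod_of_dvd _ (dvd_pow_self q (by omega))]
      have h7 : Y / q % q ^ m = A / q := by
        have : q * (Y / q % q ^ m) = q * (A / q) := by omega
        exact Nat.eq_of_mul_eq_mul_left (by omega) this
      cases i with
      | zero => simpa using h6
      | succ i =>
        rw [pow_succ', ← Nat.div_div_eq_div_mul, ← Nat.div_div_eq_div_mul]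
        exact h1.2 h7 i (by omega)

lemma exists_digits (q : ℕ) (hq : 2 ≤ q) (m : ℕ) : ∀ d : ℕ → ℕ, (∀ i, d i < q) →
    ∃ A < q ^ m, ∀ i < m, A / q ^ i % q = d i := by
  induction m with
  | zero => intro d _; exact ⟨0, by simp, by simp⟩
  | succ m ih =>
    intro d hd
    obtain ⟨A, hA, h⟩ := ih (fun i => d (i + 1)) (fun i => hd _)
    have hd0 := hd 0
    refine ⟨d 0 + q * A, ?_, ?_⟩
    · rw [pow_succ']; nlinarith
    · intro i hi
      cases i with
      | zero => simp [Nat.mod_eq_of_lt hd0]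
      | succ i =>
        rw [pow_succ', ← Nat.div_div_eq_div_mul, Nat.add_mul_div_left _ _ (by omega),
          Nat.div_eq_of_lt hd0, zero_add]
        exact h i (by omega)

lemma qdigit_eq (q : ℕ) (hq : 2 ≤ q) (x : ℝ) (n m i : ℕ) (hi : i < m) :
    qdigit q x (n + i) = ⌊x * (q : ℝ) ^ (n + m)⌋₊ / q ^ (m - 1 - i) % q := by
  unfold qdigit
  have hq0 : (q : ℝ) ≠ 0 := by positivity
  rw [Int.floor_toNat, ← Nat.floor_div_natCast]
  have : x * (q : ℝ) ^ (n + m) / ((q ^ (m - 1 - i) : ℕ) : ℝ) = x * (q : ℝ) ^ (n + i + 1) := by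
    rw [div_eq_iff (by positivity), mul_assoc]
    push_cast
    rw [← pow_add]
    congr 2
    omega
  rw [this]

lemma cell_iff (q : ℕ) (hq : 2 ≤ q) (x : ℝ) (hx : 0 ≤ x) (n m A : ℕ) :
    ⌊x * (q : ℝ) ^ (n + m)⌋₊ % q ^ m = A ↔
      Int.fract (x * (q : ℝ) ^ n) ∈ Set.Ico ((A : ℝ) / q ^ m) (((A : ℝ) + 1) / q ^ m) := by
  set z := x * (q : ℝ) ^ n with hz
  have hz0 : 0 ≤ z := by positivity
  have hQ : (0 : ℝ) < (q : ℝ) ^ m := by positivity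
  have e1 : x * (q : ℝ) ^ (n + m) = z * (q : ℝ) ^ m := by rw [hz, pow_add]; ring
  rw [e1]
  set Y := ⌊z * (q : ℝ) ^ m⌋₊ with hY
  have e2 : ⌊z⌋₊ = Y / q ^ m := by
    rw [hY, ← Nat.floor_div_natCast]
    congr 1
    push_cast
    field_simp
  have e3 : Int.fract z = z - (Y / q ^ m : ℕ) := by
    rw [← e2, Int.fract, natCast_floor_eq_intCast_floor hz0]
  have e4 := Nat.mod_add_div Y (q ^ m)
  have e4' : ((Y % q ^ m : ℕ) : ℝ) + (q : ℝ) ^ m * ((Y / q ^ m : ℕ) : ℝ) = Y := by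
    exact_mod_cast e4
  have l1 : (Y : ℝ) ≤ z * (q : ℝ) ^ m := Nat.floor_le (by positivity)
  have l2 : z * (q : ℝ) ^ m < Y + 1 := Nat.lt_floor_add_one _
  rw [Set.mem_Ico, div_le_iff₀ hQ, lt_div_iff₀ hQ, e3, sub_mul]
  constructor
  · intro h
    rw [h] at e4'
    constructor <;> nlinarith
  · rintro ⟨h1, h2⟩
    have a1 : (A : ℝ) < ((Y % q ^ m : ℕ) : ℝ) + 1 := by nlinarith
    have a2 : ((Y % q ^ m : ℕ) : ℝ) < A + 1 := by nlinarith
    have a1' : A < Y % q ^ m + 1 := by exact_mod_cast a1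
    have a2' : Y % q ^ m < A + 1 := by exact_mod_cast a2
    omega

lemma word_iff (q : ℕ) (hq : 2 ≤ q) (x : ℝ) (hx : 0 ≤ x) (m A : ℕ) (hA : A < q ^ m)
    (d : Fin m → ℕ) (hd : ∀ i : Fin m, A / q ^ (m - 1 - (i : ℕ)) % q = d i) (n : ℕ) :
    (∀ i : Fin m, qdigit q x (n + (i : ℕ)) = d i) ↔
      Int.fract (x * (q : ℝ) ^ n) ∈ Set.Ico ((A : ℝ) / q ^ m) (((A : ℝ) + 1) / q ^ m) := by
  rw [← cell_iff q hq x hx, ← digits_eq_iff q hq m _ A hA]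
  constructor
  · intro h i hi
    have := h ⟨m - 1 - i, by omega⟩
    rw [qdigit_eq q hq x n m _ (by simp; omega), ← hd] at this
    have e : m - 1 - (m - 1 - i) = i := by omega
    simpa [e] using this
  · intro h i
    rw [qdigit_eq q hq x n m _ i.2, ← hd]
    exact h _ (by omega)

/-- Number of `n < N` with fractional part of `u n` in `[a,b)`. -/
noncomputable def cnt (u : ℕ → ℝ) (a b : ℝ) (N : ℕ) : ℕ :=
  ((Finset.range N).filter fun n => Int.fract (u n) ∈ Set.Ico a b).card

lemma isNormal_iff (q : ℕ) (hq : 2 ≤ q) (x : ℝ) (hx : 0 ≤ x) :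
    IsNormal q x ↔ ∀ m : ℕ, 0 < m → ∀ A < q ^ m,
      Tendsto (fun N : ℕ => (cnt (fun n => x * (q : ℝ) ^ n) ((A : ℝ) / q ^ m)
        (((A : ℝ) + 1) / q ^ m) N : ℝ) / N) atTop (𝓝 (((q : ℝ) ^ m)⁻¹)) := by
  constructor
  · intro h m hm A hA
    have := h m hm (fun i => A / q ^ (m - 1 - (i : ℕ)) % q) (fun i => Nat.mod_lt _ (by omega))
    simp_rw [word_iff q hq x hx m A hA _ (fun i => rfl)] at this
    exact this
  · intro h m hm d hd
    obtain ⟨A, hA, hA'⟩ := exists_digits q hq m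
      (fun j => if hj : m - 1 - j < m then d ⟨m - 1 - j, hj⟩ else 0)
      (fun j => by split_ifs; exacts [hd _, by omega])
    have hd' : ∀ i : Fin m, A / q ^ (m - 1 - (i : ℕ)) % q = d i := by
      intro i
      rw [hA' _ (by omega)]
      have e : m - 1 - (m - 1 - (i : ℕ)) = i := by omega
      simp [e]
    simp_rw [word_iff q hq x hx m A hA d hd']
    exact h m hm A hA

/-! ### Exponential sums -/

/-- `e(y) = exp(2 π i y)`. -/
noncomputable def ee (y : ℝ) : ℂ := Complex.exp (2 * Real.pi * Complex.I * y)

lemma ee_add (a b : ℝ) : ee (a + b) = ee a * ee b := by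
  unfold ee; rw [← Complex.exp_add]; push_cast; ring_nf

lemma ee_norm (a : ℝ) : ‖ee a‖ = 1 := by
  unfold ee
  have : (2 * Real.pi * Complex.I * a : ℂ) = ((2 * Real.pi * a : ℝ) : ℂ) * Complex.I := by
    push_cast; ring
  rw [this, Complex.norm_exp_ofReal_mul_I]

lemma ee_conj (a : ℝ) : (starRingEnd ℂ) (ee a) = ee (-a) := by
  unfold ee
  rw [← Complex.exp_conj]
  have h2 : (starRingEnd ℂ) (2 : ℂ) = 2 := Complex.conj_ofNat 2
  simp [h2]

lemma ee_int (k : ℤ) : ee k = 1 := by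
  unfold ee
  rw [Complex.exp_eq_one_iff]
  exact ⟨k, by push_cast; ring⟩

lemma ee_lip (a b : ℝ) : ‖ee a - ee b‖ ≤ 2 * Real.pi * |a - b| := by
  have h1 : ee a - ee b = ee b * (ee (a - b) - 1) := by
    rw [mul_sub, ← ee_add]; simp
  rw [h1, norm_mul, ee_norm, one_mul]
  have := Real.norm_exp_I_mul_ofReal_sub_one_le (x := 2 * Real.pi * (a - b))
  unfold ee
  have e : (2 * Real.pi * Complex.I * ((a - b : ℝ) : ℂ) : ℂ)
      = Complex.I * ((2 * Real.pi * (a - b) : ℝ) : ℂ) := by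
    push_cast; ring
  rw [e]
  refine this.trans ?_
  rw [Real.norm_eq_abs, abs_mul, abs_of_pos Real.two_pi_pos]

lemma ee_mul_fract (h : ℤ) (y : ℝ) : ee (h * Int.fract y) = ee (h * y) := by
  have : (h : ℝ) * y = h * Int.fract y + ((h * ⌊y⌋ : ℤ) : ℝ) := by
    push_cast; rw [← mul_add, Int.fract_add_floor]
  rw [this, ee_add, ee_int, mul_one]

lemma ee_nat_mul (n : ℕ) (y : ℝ) : ee (n * y) = ee y ^ n := by
  unfold ee
  rw [← Complex.exp_nat_mul]
  push_cast; ring_nf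

/-- Weyl sums of `x q^n` are `o(N)`. -/
def WeylE (q : ℕ) (x : ℝ) : Prop :=
  ∀ h : ℤ, h ≠ 0 → Tendsto
    (fun N : ℕ => (∑ n ∈ Finset.range N, ee (h * (x * (q : ℝ) ^ n))) / (N : ℂ)) atTop (𝓝 0)

/-! ### Van der Corput type argument -/

lemma shift_sum (a : ℕ → ℂ) (ha : ∀ n, ‖a n‖ ≤ 1) (N k : ℕ) :
    ‖∑ n ∈ Finset.range N, a n - ∑ n ∈ Finset.range N, a (n + k)‖ ≤ 2 * k := by
  have h1 : ∑ n ∈ Finset.range N, a n + ∑ n ∈ Finset.range k, a (N + n)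
      = ∑ n ∈ Finset.range k, a n + ∑ n ∈ Finset.range N, a (n + k) := by
    rw [← Finset.sum_range_add]
    rw [add_comm N k, Finset.sum_range_add]
    simp_rw [add_comm k]
  have h2 : ∑ n ∈ Finset.range N, a n - ∑ n ∈ Finset.range N, a (n + k)
      = ∑ n ∈ Finset.range k, a n - ∑ n ∈ Finset.range k, a (N + n) := by
    linear_combination h1
  rw [h2]
  have b : ∀ f : ℕ → ℂ, (∀ n, ‖f n‖ ≤ 1) → ‖∑ n ∈ Finset.range k, f n‖ ≤ k := by
    intro f hf
    refine (norm_sum_le _ _).trans ?_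
    refine (Finset.sum_le_sum (fun i _ => hf i)).trans ?_
    simp
  refine (norm_sub_le _ _).trans ?_
  have := b a ha
  have := b (fun n => a (N + n)) (fun n => ha _)
  linarith

lemma vdc_ineq (a : ℕ → ℂ) (ha : ∀ n, ‖a n‖ ≤ 1) (r : ℕ) (hr : 0 < r) (K N : ℕ) :
    (K : ℝ) * ‖∑ n ∈ Finset.range N, a (r * n)‖ ≤
      Real.sqrt (N * ∑ n ∈ Finset.range (r * N), ‖∑ k ∈ Finset.range K, a (n + r * k)‖ ^ 2)
        + 2 * (K : ℝ) ^ 2 := by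
  set S := ∑ n ∈ Finset.range N, a (r * n) with hS
  set W := ∑ n ∈ Finset.range N, ∑ k ∈ Finset.range K, a (r * n + r * k) with hW
  have h1 : ‖(K : ℂ) * S - W‖ ≤ 2 * (K : ℝ) ^ 2 := by
    have : (K : ℂ) * S - W = ∑ k ∈ Finset.range K, (S - ∑ n ∈ Finset.range N, a (r * (n + k))) := by
      rw [Finset.sum_sub_distrib, hW, Finset.sum_comm]
      simp [mul_add]
    rw [this]
    refine (norm_sum_le _ _).trans ?_
    refine (Finset.sum_le_sum (g := fun _ => 2 * (K : ℝ)) ?_).trans ?_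
    · intro k hk
      refine (shift_sum (fun n => a (r * n)) (fun n => ha _) N k).trans ?_
      have : (k : ℝ) ≤ K := by exact_mod_cast (Finset.mem_range.1 hk).le
      linarith
    · simp; nlinarith
  have h2 : ‖W‖ ≤ Real.sqrt (N * ∑ n ∈ Finset.range (r * N),
      ‖∑ k ∈ Finset.range K, a (n + r * k)‖ ^ 2) := by
    apply Real.le_sqrt_of_sq_le
    have c1 : ‖W‖ ≤ ∑ n ∈ Finset.range N, ‖∑ k ∈ Finset.range K, a (r * n + r * k)‖ :=
      norm_sum_le _ _
    have c2 : ‖W‖ ^ 2 ≤ (∑ n ∈ Finset.range N, ‖∑ k ∈ Finset.range K, a (r * n + r * k)‖) ^ 2 :=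
      pow_le_pow_left₀ (norm_nonneg _) c1 2
    refine c2.trans ((sq_sum_le_card_mul_sum_sq).trans ?_)
    rw [Finset.card_range]
    refine mul_le_mul_of_nonneg_left ?_ (by positivity)
    rw [← Finset.sum_image (s := Finset.range N) (g := fun n => r * n)
      (f := fun n => ‖∑ k ∈ Finset.range K, a (n + r * k)‖ ^ 2)
      (by intro i _ j _ hij; exact Nat.eq_of_mul_eq_mul_left hr hij)]
    apply Finset.sum_le_sum_of_subset_of_nonneg
    · intro i hi
      simp only [Finset.mem_image, Finset.mem_range] at hi ⊢
      obtain ⟨j, hj, rfl⟩ := hi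
      exact Nat.mul_lt_mul_of_pos_left hj hr
    · intros; positivity
  have h3 : ‖(K : ℂ) * S‖ = (K : ℝ) * ‖S‖ := by simp
  have h4 := norm_sub_norm_le ((K : ℂ) * S) W
  rw [h3] at h4
  linarith

lemma vdc_limit (a : ℕ → ℂ) (ha : ∀ n, ‖a n‖ = 1) (r : ℕ) (hr : 0 < r)
    (hcorr : ∀ k l : ℕ, k ≠ l → Tendsto (fun N : ℕ =>
      (∑ n ∈ Finset.range N, a (n + r * k) * (starRingEnd ℂ) (a (n + r * l))) / (N : ℂ))
      atTop (𝓝 0)) :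
    Tendsto (fun N : ℕ => (∑ n ∈ Finset.range N, a (r * n)) / (N : ℂ)) atTop (𝓝 0) := by
  have key : ∀ K : ℕ, Tendsto (fun N : ℕ =>
      (∑ n ∈ Finset.range N, ‖∑ k ∈ Finset.range K, a (n + r * k)‖ ^ 2) / (N : ℝ))
      atTop (𝓝 (K : ℝ)) := by
    intro K
    have h1 : ∀ N : ℕ, (((∑ n ∈ Finset.range N,
        ‖∑ k ∈ Finset.range K, a (n + r * k)‖ ^ 2) / (N : ℝ) : ℝ) : ℂ)
        = ∑ k ∈ Finset.range K, ∑ l ∈ Finset.range K,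
          (∑ n ∈ Finset.range N, a (n + r * k) * (starRingEnd ℂ) (a (n + r * l))) / (N : ℂ) := by
      intro N
      push_cast
      simp_rw [← Finset.sum_div]
      congr 1
      simp_rw [← Complex.mul_conj', map_sum, Finset.sum_mul_sum]
      rw [Finset.sum_comm]
      refine Finset.sum_congr rfl fun k _ => ?_
      rw [Finset.sum_comm]
    have h2 : Tendsto (fun N : ℕ => ∑ k ∈ Finset.range K, ∑ l ∈ Finset.range K,
          (∑ n ∈ Finset.range N, a (n + r * k) * (starRingEnd ℂ) (a (n + r * l))) / (N : ℂ))
          atTop (𝓝 (∑ k ∈ Finset.range K, ∑ l ∈ Finset.range K, if k = l then 1 else 0)) := by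
      refine tendsto_finsetSum _ fun k _ => tendsto_finsetSum _ fun l _ => ?_
      split_ifs with hkl
      · subst hkl
        apply tendsto_const_nhds.congr'
        filter_upwards [eventually_gt_atTop 0] with N hN
        simp_rw [Complex.mul_conj', ha]
        have : (N : ℂ) ≠ 0 := by exact_mod_cast hN.ne'
        simp [this]
      · exact hcorr k l hkl
    have h3 : (∑ k ∈ Finset.range K, ∑ l ∈ Finset.range K, if k = l then (1 : ℂ) else 0)
        = ((K : ℝ) : ℂ) := by
      have : ∀ k ∈ Finset.range K, (∑ l ∈ Finset.range K, if k = l then (1 : ℂ) else 0) = 1 := by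
        intro k hk
        rw [Finset.sum_ite_eq, if_pos hk]
      rw [Finset.sum_congr rfl this]
      simp
    rw [h3] at h2
    simp_rw [← h1] at h2
    exact Complex.continuous_re.continuousAt.tendsto.comp h2
  rw [tendsto_zero_iff_norm_tendsto_zero, Metric.tendsto_atTop]
  intro ε hε
  -- choose K with sqrt ((r+1)/K) < ε/2
  obtain ⟨K, hK⟩ := exists_nat_gt (max 1 (4 * ((r : ℝ) * 2) / ε ^ 2))
  have hK1 : (1 : ℝ) < K := lt_of_le_of_lt (le_max_left _ _) hK
  have hK2 : 4 * ((r : ℝ) * 2) / ε ^ 2 < K := lt_of_le_of_lt (le_max_right _ _) hK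
  have hr' : (0 : ℝ) < r := by exact_mod_cast hr
  have ht : Tendsto (fun N : ℕ => r * N) atTop atTop :=
    tendsto_id.const_mul_atTop' hr
  have ev1 := ((key K).comp ht).eventually (gt_mem_nhds (show (K : ℝ) < 2 * K by linarith))
  have ev2 : ∀ᶠ N : ℕ in atTop, 2 * (K : ℝ) / N < ε / 2 :=
    (tendsto_const_div_atTop_nhds_zero_nat (2 * (K : ℝ))).eventually (gt_mem_nhds (by positivity))
  obtain ⟨N0, hN0⟩ := eventually_atTop.1 ((ev1.and ev2).and (eventually_gt_atTop 0))
  refine ⟨N0, fun N hN => ?_⟩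
  obtain ⟨⟨e1, e2⟩, e3⟩ := hN0 N hN
  have hNp : (0 : ℝ) < N := by exact_mod_cast e3
  have ineq := vdc_ineq a (fun n => (ha n).le) r hr K N
  simp only [Function.comp] at e1
  rw [div_lt_iff₀ (by push_cast; positivity)] at e1
  push_cast at e1
  set B := ∑ n ∈ Finset.range (r * N), ‖∑ k ∈ Finset.range K, a (n + r * k)‖ ^ 2
  have hs : Real.sqrt (N * B) < N * K * (ε / 2) := by
    rw [Real.sqrt_lt' (by positivity)]
    rw [div_lt_iff₀ (by positivity)] at hK2
    have : (N : ℝ) * B < N * (2 * K * (r * N)) := mul_lt_mul_of_pos_left e1 hNp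
    refine this.trans ?_
    have h5 : (N * K * (ε / 2)) ^ 2 = (N : ℝ) ^ 2 * K / 4 * (K * ε ^ 2) := by ring
    rw [h5]
    have h6 : (N : ℝ) * (2 * K * (r * N)) = (N : ℝ) ^ 2 * K / 4 * (4 * (r * 2)) := by ring
    rw [h6]
    exact mul_lt_mul_of_pos_left hK2 (by positivity)
  rw [div_lt_iff₀ hNp] at e2
  rw [Real.dist_eq, sub_zero, abs_of_nonneg (norm_nonneg _), norm_div, Complex.norm_natCast,
    div_lt_iff₀ hNp]
  have : (K : ℝ) * ‖∑ n ∈ Finset.range N, a (r * n)‖ < K * (ε * N) := by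
    have : 2 * (K : ℝ) ^ 2 < K * (ε / 2 * N) := by
      rw [sq, ← mul_assoc, mul_comm (2 * (K : ℝ)) K]
      exact mul_lt_mul_of_pos_left e2 (by positivity)
    nlinarith
  exact lt_of_mul_lt_mul_left this (by positivity)

lemma weylE_pow (q : ℕ) (hq : 2 ≤ q) (x : ℝ) (r : ℕ) (hr : 0 < r) (H : WeylE q x) :
    WeylE (q ^ r) x := by
  intro h hh
  have := vdc_limit (fun n => ee (h * (x * (q : ℝ) ^ n))) (fun n => ee_norm _) r hr ?_
  · simpa [pow_mul] using this
  · intro k l hkl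
    have hne : h * ((q : ℤ) ^ (r * k) - (q : ℤ) ^ (r * l)) ≠ 0 := by
      refine mul_ne_zero hh (sub_ne_zero.2 fun e => hkl ?_)
      have e' : q ^ (r * k) = q ^ (r * l) := by exact_mod_cast e
      exact Nat.eq_of_mul_eq_mul_left hr (Nat.pow_right_injective hq e')
    refine (H _ hne).congr fun N => ?_
    congr 1
    refine Finset.sum_congr rfl fun n _ => ?_
    rw [ee_conj, ← ee_add]
    congr 1
    push_cast
    rw [pow_add, pow_add]
    ring

lemma sum_range_mul' (b : ℕ → ℂ) (r M : ℕ) :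
    ∑ n ∈ Finset.range (r * M), b n
      = ∑ j ∈ Finset.range r, ∑ n ∈ Finset.range M, b (r * n + j) := by
  rw [Finset.sum_comm]
  induction M with
  | zero => simp
  | succ M ih => rw [Nat.mul_succ, Finset.sum_range_add, ih, Finset.sum_range_succ]

lemma weylE_of_pow (q : ℕ) (x : ℝ) (r : ℕ) (hr : 0 < r) (hq : 2 ≤ q)
    (H : WeylE (q ^ r) x) : WeylE q x := by
  intro h hh
  set b : ℕ → ℂ := fun n => ee (h * (x * (q : ℝ) ^ n)) with hb
  have h1 : ∀ j, Tendsto (fun M : ℕ => (∑ n ∈ Finset.range M, b (r * n + j)) / (M : ℂ))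
      atTop (𝓝 0) := by
    intro j
    have hne : h * (q : ℤ) ^ j ≠ 0 := mul_ne_zero hh (pow_ne_zero _ (by omega))
    refine (H _ hne).congr fun N => ?_
    congr 1
    refine Finset.sum_congr rfl fun n _ => ?_
    simp only [hb]
    congr 1
    push_cast
    rw [pow_add, pow_mul]
    ring
  have h2 : Tendsto (fun M : ℕ => ∑ j ∈ Finset.range r,
      ‖(∑ n ∈ Finset.range M, b (r * n + j)) / (M : ℂ)‖) atTop (𝓝 0) := by
    have := tendsto_finsetSum (Finset.range r) (fun j _ => (h1 j).norm)
    simpa using this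
  have h3 : Tendsto (fun N : ℕ => N / r) atTop atTop := Nat.tendsto_div_const_atTop hr.ne'
  have h4 := (h2.comp h3).add (tendsto_const_div_atTop_nhds_zero_nat (r : ℝ))
  rw [add_zero] at h4
  apply squeeze_zero_norm' _ h4
  filter_upwards [eventually_ge_atTop r] with N hN
  have hNp : (0 : ℝ) < N := by exact_mod_cast lt_of_lt_of_le hr hN
  simp only [Function.comp]
  set M := N / r with hM
  have hMp : 0 < M := Nat.div_pos hN hr
  have hMp' : (0 : ℝ) < M := by exact_mod_cast hMp
  have hN' : N = r * M + N % r := (Nat.div_add_mod N r).symm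
  have hMN : (M : ℝ) ≤ N := by exact_mod_cast Nat.div_le_self N r
  have e1 : ‖∑ n ∈ Finset.range N, b n‖ ≤
      ∑ j ∈ Finset.range r, ‖∑ n ∈ Finset.range M, b (r * n + j)‖ + r := by
    conv_lhs => rw [hN']
    rw [Finset.sum_range_add, sum_range_mul']
    refine (norm_add_le _ _).trans (add_le_add (norm_sum_le _ _) ?_)
    refine (norm_sum_le _ _).trans ?_
    simp only [hb, ee_norm]
    simp only [Finset.sum_const, Finset.card_range, nsmul_eq_mul, mul_one]
    exact_mod_cast (Nat.mod_lt N hr).le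
  rw [norm_div, Complex.norm_natCast]
  calc ‖∑ n ∈ Finset.range N, b n‖ / N ≤
      (∑ j ∈ Finset.range r, ‖∑ n ∈ Finset.range M, b (r * n + j)‖ + r) / N := by gcongr
    _ = ∑ j ∈ Finset.range r, ‖∑ n ∈ Finset.range M, b (r * n + j)‖ / N + r / N := by
      rw [add_div, Finset.sum_div]
    _ ≤ _ := by
      gcongr with j hj
      rw [norm_div, Complex.norm_natCast]
      gcongr

/-! ### Weyl criterion -/

lemma mem_cell_iff (M : ℕ) (hM : 0 < M) (f : ℝ) (hf : 0 ≤ f) (A : ℕ) :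
    f ∈ Set.Ico ((A : ℝ) / M) (((A : ℝ) + 1) / M) ↔ ⌊f * M⌋₊ = A := by
  have hM' : (0 : ℝ) < M := by exact_mod_cast hM
  rw [Nat.floor_eq_iff (by positivity), Set.mem_Ico, div_le_iff₀ hM', lt_div_iff₀ hM']

lemma cell_approx (u : ℕ → ℝ) (h : ℤ) (M : ℕ) (hM : 0 < M) (N : ℕ) :
    ‖∑ n ∈ Finset.range N, ee (h * u n) - ∑ A ∈ Finset.range M,
      (cnt u ((A : ℝ) / M) (((A : ℝ) + 1) / M) N : ℂ) * ee (h * (A / M))‖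
      ≤ N * (2 * Real.pi * (|(h : ℝ)| / M)) := by
  have hM' : (0 : ℝ) < M := by exact_mod_cast hM
  have e1 : ∑ A ∈ Finset.range M,
      (cnt u ((A : ℝ) / M) (((A : ℝ) + 1) / M) N : ℂ) * ee (h * (A / M))
      = ∑ n ∈ Finset.range N, ee (h * ((⌊Int.fract (u n) * M⌋₊ : ℕ) / M)) := by
    have : ∀ A ∈ Finset.range M,
        (cnt u ((A : ℝ) / M) (((A : ℝ) + 1) / M) N : ℂ) * ee (h * (A / M))
        = ∑ n ∈ Finset.range N,
          if ⌊Int.fract (u n) * M⌋₊ = A then ee (h * (A / M)) else 0 := by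
      intro A _
      unfold cnt
      rw [← Finset.sum_filter, Finset.sum_const, nsmul_eq_mul]
      simp_rw [mem_cell_iff M hM _ (Int.fract_nonneg _)]
    rw [Finset.sum_congr rfl this, Finset.sum_comm]
    refine Finset.sum_congr rfl fun n _ => ?_
    rw [Finset.sum_ite_eq, if_pos]
    rw [Finset.mem_range, Nat.floor_lt (by positivity)]
    nlinarith [Int.fract_lt_one (u n)]
  rw [e1, ← Finset.sum_sub_distrib]
  refine (norm_sum_le _ _).trans ?_
  refine (Finset.sum_le_sum (g := fun _ => 2 * Real.pi * (|(h : ℝ)| / M)) ?_).trans (by simp)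
  intro n _
  rw [← ee_mul_fract]
  refine (ee_lip _ _).trans ?_
  gcongr
  rw [← mul_sub, abs_mul, div_eq_mul_inv |(h : ℝ)| (M : ℝ)]
  gcongr
  have hf : 0 ≤ Int.fract (u n) * M := by positivity
  have f1 := Nat.floor_le hf
  have f2 := Nat.lt_floor_add_one (Int.fract (u n) * M)
  have : Int.fract (u n) - (⌊Int.fract (u n) * M⌋₊ : ℝ) / M
      = (Int.fract (u n) * M - ⌊Int.fract (u n) * M⌋₊) * (M : ℝ)⁻¹ := by
    field_simp
  rw [this, abs_mul, abs_of_nonneg (by linarith), abs_of_nonneg (by positivity)]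
  nlinarith [inv_pos.2 hM']

lemma ee_geom (h : ℤ) (hh : h ≠ 0) (M : ℕ) (hM : |(h : ℝ)| < M) :
    ∑ A ∈ Finset.range M, ee (h * (A / M)) = 0 := by
  have hM' : (0 : ℝ) < M := lt_of_le_of_lt (abs_nonneg _) hM
  have e : ∀ A : ℕ, ee (h * (A / M)) = ee (h / M) ^ A := by
    intro A; rw [← ee_nat_mul]; congr 1; ring
  simp_rw [e]
  have h1 : ee (h / M) ≠ 1 := by
    unfold ee
    rw [Ne, Complex.exp_eq_one_iff]
    rintro ⟨k, hk⟩
    have hk' : ((h / M : ℝ) : ℂ) = k := by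
      have : (2 * Real.pi * Complex.I : ℂ) ≠ 0 := Complex.two_pi_I_ne_zero
      apply mul_left_cancel₀ this
      rw [hk]; ring
    have hk2 : (h / M : ℝ) = k := by exact_mod_cast hk'
    rw [div_eq_iff hM'.ne'] at hk2
    by_cases hk0 : k = 0
    · subst hk0; simp at hk2; exact hh hk2
    · have : (1 : ℝ) ≤ |(k : ℝ)| := by exact_mod_cast Int.one_le_abs hk0
      rw [hk2, abs_mul, abs_of_pos hM'] at hM
      nlinarith
  rw [geom_sum_eq h1, ← ee_nat_mul]
  have : (M : ℝ) * (h / M) = h := by field_simp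
  rw [this, ee_int]
  simp

lemma weylE_of_isNormal (q : ℕ) (hq : 2 ≤ q) (x : ℝ) (hx : 0 ≤ x) (H : IsNormal q x) :
    WeylE q x := by
  rw [isNormal_iff q hq x hx] at H
  intro h hh
  rw [Metric.tendsto_atTop]
  intro ε hε
  obtain ⟨m, hm⟩ := pow_unbounded_of_one_lt (max |(h : ℝ)| (2 * (2 * Real.pi * |(h : ℝ)|) / ε))
    (show (1 : ℝ) < q by exact_mod_cast hq)
  have hm1 : |(h : ℝ)| < (q : ℝ) ^ m := lt_of_le_of_lt (le_max_left _ _) hm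
  have hm2 : 2 * (2 * Real.pi * |(h : ℝ)|) / ε < (q : ℝ) ^ m := lt_of_le_of_lt (le_max_right _ _) hm
  have hm0 : 0 < m := by
    rcases Nat.eq_zero_or_pos m with rfl | h0
    · have : (1 : ℝ) ≤ |(h : ℝ)| := by exact_mod_cast Int.one_le_abs hh
      simp only [pow_zero] at hm1
      linarith
    · exact h0
  set M := q ^ m with hM
  have hMc : ((M : ℕ) : ℝ) = (q : ℝ) ^ m := by rw [hM]; push_cast; rfl
  rw [← hMc] at hm1 hm2
  have hMpos : 0 < M := by positivity
  have hMpos' : (0 : ℝ) < M := by exact_mod_cast hMpos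
  set u : ℕ → ℝ := fun n => x * (q : ℝ) ^ n with hu
  have lim : Tendsto (fun N : ℕ => ∑ A ∈ Finset.range M,
      (((cnt u ((A : ℝ) / M) (((A : ℝ) + 1) / M) N : ℝ) / N : ℝ) : ℂ) * ee (h * (A / M)))
      atTop (𝓝 0) := by
    have h0 : (0 : ℂ) = ∑ A ∈ Finset.range M, ((((M : ℕ) : ℝ)⁻¹ : ℝ) : ℂ) * ee (h * (A / M)) := by
      rw [← Finset.mul_sum, ee_geom h hh M hm1, mul_zero]
    rw [h0]
    refine tendsto_finsetSum _ fun A hA => Tendsto.mul_const _ ?_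
    refine (Complex.continuous_ofReal.tendsto _).comp ?_
    have := H m hm0 A (Finset.mem_range.1 hA)
    rw [← hMc] at this
    exact this
  obtain ⟨N0, hN0⟩ := Metric.tendsto_atTop.1 lim (ε / 2) (by positivity)
  refine ⟨max N0 1, fun N hN => ?_⟩
  have hN1 : (0 : ℝ) < N := by
    have : 0 < N := lt_of_lt_of_le one_pos ((le_max_right _ _).trans hN)
    exact_mod_cast this
  have b1 := hN0 N ((le_max_left _ _).trans hN)
  have b2 := cell_approx u h M hMpos N
  rw [dist_zero_right] at b1 ⊢
  set S := ∑ n ∈ Finset.range N, ee (h * u n)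
  set R := ∑ A ∈ Finset.range M,
      (cnt u ((A : ℝ) / M) (((A : ℝ) + 1) / M) N : ℂ) * ee (h * (A / M)) with hR
  have b3 : (∑ A ∈ Finset.range M,
      (((cnt u ((A : ℝ) / M) (((A : ℝ) + 1) / M) N : ℝ) / N : ℝ) : ℂ) * ee (h * (A / M)))
      = R / N := by
    rw [hR, Finset.sum_div]
    refine Finset.sum_congr rfl fun A _ => ?_
    push_cast; ring
  rw [b3] at b1
  have b4 : ‖(S - R) / (N : ℂ)‖ < ε / 2 := by
    rw [norm_div, Complex.norm_natCast, div_lt_iff₀ hN1]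
    refine b2.trans_lt ?_
    rw [div_lt_iff₀ hε] at hm2
    rw [mul_comm]
    gcongr
    rw [← mul_div_assoc, div_lt_iff₀ hMpos']
    nlinarith
  have b5 : S / (N : ℂ) = (S - R) / N + R / N := by ring
  rw [b5]
  exact (norm_add_le _ _).trans_lt (by linarith)

/-- Empirical probability measure of `u 0, …, u N` on the circle. -/
noncomputable def emp (u : ℕ → ℝ) (N : ℕ) : Measure UnitAddCircle :=
  ((N : ENNReal) + 1)⁻¹ • ∑ n ∈ Finset.range (N + 1), Measure.dirac ((u n : ℝ) : UnitAddCircle)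

instance emp_prob (u : ℕ → ℝ) (N : ℕ) : IsProbabilityMeasure (emp u N) := by
  constructor
  unfold emp
  simp only [Measure.smul_apply, Measure.finsetSum_apply, measure_univ, Finset.sum_const,
    Finset.card_range, smul_eq_mul, nsmul_eq_mul, mul_one]
  push_cast
  exact ENNReal.inv_mul_cancel (by simp) (by finiteness)

lemma emp_integral (u : ℕ → ℝ) (N : ℕ) (f : C(UnitAddCircle, ℂ)) :
    ∫ z, f z ∂(emp u N) = (∑ n ∈ Finset.range (N + 1), f (u n : ℝ)) / ((N + 1 : ℕ) : ℂ) := by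
  unfold emp
  rw [integral_smul_measure, integral_finsetSum_measure]
  · simp only [integral_dirac]
    rw [Complex.real_smul, ENNReal.toReal_inv]
    have : ((N : ENNReal) + 1).toReal = N + 1 := by
      rw [ENNReal.toReal_add (by finiteness) (by finiteness)]; simp
    rw [this]
    push_cast
    ring
  · intro i _
    exact integrable_dirac (by simp [enorm_lt_top])

lemma fourier_ee (h : ℤ) (y : ℝ) : fourier h (y : UnitAddCircle) = ee (h * y) := by
  rw [fourier_coe_apply]
  unfold ee
  congr 1
  push_cast
  simp
  ring

lemma emp_tendsto_integral (u : ℕ → ℝ)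
    (H : ∀ h : ℤ, h ≠ 0 → Tendsto
      (fun N : ℕ => (∑ n ∈ Finset.range N, ee (h * u n)) / (N : ℂ)) atTop (𝓝 0))
    (f : C(UnitAddCircle, ℂ)) :
    Tendsto (fun N => ∫ z, f z ∂(emp u N)) atTop (𝓝 (∫ z : UnitAddCircle, f z)) := by
  have hint : ∀ (μ : Measure UnitAddCircle) [IsProbabilityMeasure μ] (g : C(UnitAddCircle, ℂ)),
      Integrable g μ := fun μ _ g =>
    g.continuous.integrable_of_hasCompactSupport (HasCompactSupport.of_compactSpace _)
  have hP : IsProbabilityMeasure (volume : Measure UnitAddCircle) := ⟨by simp⟩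
  have hspan : ∀ g ∈ Submodule.span ℂ (Set.range (@fourier 1)),
      Tendsto (fun N => ∫ z, g z ∂(emp u N)) atTop (𝓝 (∫ z : UnitAddCircle, g z)) := by
    intro g hg
    induction hg using Submodule.span_induction with
    | mem g hg =>
      obtain ⟨h, rfl⟩ := hg
      by_cases hh : h = 0
      · subst hh
        simp
      · have : ∫ z : UnitAddCircle, fourier h z = 0 := by
          have := integral_eq_zero_of_add_right_eq_neg (μ := (volume : Measure UnitAddCircle))
            (fourier_add_half_inv_index hh one_pos)
          exact this
        rw [this]
        simp_rw [emp_integral, fourier_ee]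
        exact (H h hh).comp (tendsto_add_atTop_nat 1)
    | zero => simp
    | add g1 g2 _ _ h1 h2 =>
      simp only [ContinuousMap.add_apply]
      simp_rw [fun N => integral_add (hint (emp u N) g1) (hint (emp u N) g2)]
      rw [integral_add (hint _ g1) (hint _ g2)]
      exact h1.add h2
    | smul c g _ h1 =>
      simp only [ContinuousMap.smul_apply]
      simp_rw [integral_smul]
      exact h1.const_smul c
  rw [Metric.tendsto_atTop]
  intro ε hε
  have hf : f ∈ (Submodule.span ℂ (Set.range (@fourier 1))).topologicalClosure := by
    rw [span_fourier_closure_eq_top]; trivial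
  obtain ⟨g, hg, hfg⟩ := Metric.mem_closure_iff.1 hf (ε / 3) (by positivity)
  obtain ⟨N0, hN0⟩ := Metric.tendsto_atTop.1 (hspan g hg) (ε / 3) (by positivity)
  refine ⟨N0, fun N hN => ?_⟩
  have hb : ∀ (μ : Measure UnitAddCircle) [IsProbabilityMeasure μ],
      dist (∫ z, f z ∂μ) (∫ z, g z ∂μ) ≤ ε / 3 := by
    intro μ _
    rw [dist_eq_norm, ← integral_sub (hint μ f) (hint μ g)]
    refine (norm_integral_le_of_norm_le_const (C := ε / 3) (ae_of_all _ fun z => ?_)).trans ?_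
    · rw [← dist_eq_norm]
      exact (ContinuousMap.dist_apply_le_dist z).trans hfg.le
    · simp
  have t1 := hb (emp u N)
  have t2 := hb volume
  have t3 := hN0 N hN
  rw [dist_comm] at t2
  have t4 := dist_triangle4 (∫ z, f z ∂(emp u N)) (∫ z, g z ∂(emp u N))
    (∫ z : UnitAddCircle, g z) (∫ z : UnitAddCircle, f z)
  linarith

/-- The arc `[a,b)` on the circle. -/
def arc (a b : ℝ) : Set UnitAddCircle := (fun y : ℝ => (y : UnitAddCircle)) '' Set.Ico a b

lemma mem_arc (a b : ℝ) (ha : 0 ≤ a) (hb : b ≤ 1) (y : ℝ) :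
    (y : UnitAddCircle) ∈ arc a b ↔ Int.fract y ∈ Set.Ico a b := by
  have hy : ((Int.fract y : ℝ) : UnitAddCircle) = y := by
    have h2 : y = Int.fract y + ⌊y⌋ • (1 : ℝ) := by simp [Int.fract_add_floor]
    conv_rhs => rw [h2]
    rw [AddCircle.coe_add, AddCircle.coe_zsmul, AddCircle.coe_period]
    simp
  constructor
  · rintro ⟨z, hz, hzy⟩
    have : Int.fract y = z := by
      rw [← hy] at hzy
      have := (AddCircle.coe_eq_coe_iff_of_mem_Ico (p := (1 : ℝ)) (a := 0)
        (x := z) (y := Int.fract y) ⟨ha.trans hz.1, by linarith [hz.2]⟩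
        ⟨Int.fract_nonneg y, by linarith [Int.fract_lt_one y]⟩).1 hzy
      exact this.symm
    rwa [this]
  · intro h
    exact ⟨_, h, hy⟩

lemma arc_frontier (a b : ℝ) (hab : a < b) :
    (volume : Measure UnitAddCircle) (frontier (arc a b)) = 0 := by
  have hc : Continuous (fun y : ℝ => (y : UnitAddCircle)) := AddCircle.continuous_mk' 1
  have h1 : closure (arc a b) ⊆ (fun y : ℝ => (y : UnitAddCircle)) '' Set.Icc a b :=
    closure_minimal (Set.image_mono Set.Ico_subset_Icc_self) (isCompact_Icc.image hc).isClosed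
  have h2 : (fun y : ℝ => (y : UnitAddCircle)) '' Set.Ioo a b ⊆ interior (arc a b) :=
    interior_maximal (Set.image_mono Set.Ioo_subset_Ico_self)
      (QuotientAddGroup.isOpenMap_coe _ isOpen_Ioo)
  have h3 : frontier (arc a b) ⊆ {(a : UnitAddCircle), (b : UnitAddCircle)} := by
    rintro z ⟨hz1, hz2⟩
    obtain ⟨y, hy, rfl⟩ := h1 hz1
    by_cases hya : y = a
    · left; rw [hya]
    by_cases hyb : y = b
    · right; simp [hyb]
    exact absurd (h2 ⟨y, ⟨lt_of_le_of_ne hy.1 (Ne.symm hya), lt_of_le_of_ne hy.2 hyb⟩, rfl⟩) hz2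
  have h4 : ∀ z : UnitAddCircle, (volume : Measure UnitAddCircle) {z} = 0 := by
    intro z
    rw [← Metric.closedBall_zero, AddCircle.volume_closedBall]
    simp
  refine measure_mono_null h3 (measure_union_null (h4 _) (h4 _))

lemma arc_measurable (a b : ℝ) (ha : 0 ≤ a) (hb : b ≤ 1) : MeasurableSet (arc a b) := by
  have : arc a b = (fun z => ((AddCircle.measurableEquivIco (1 : ℝ) 0 z : Set.Ico (0 : ℝ) (0 + 1)) : ℝ)) ⁻¹' Set.Ico a b := by
    ext z
    induction z using QuotientAddGroup.induction_on with
    | H y =>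
      rw [mem_arc a b ha hb, Set.mem_preimage]
      have : ((AddCircle.measurableEquivIco (1 : ℝ) 0 (y : UnitAddCircle) : Set.Ico (0 : ℝ) (0 + 1)) : ℝ)
          = Int.fract y := by
        have := AddCircle.coe_equivIco_mk_apply (1 : ℝ) y
        rw [div_one, mul_one] at this
        exact this
      erw [this]
  rw [this]
  exact (measurable_subtype_coe.comp (AddCircle.measurableEquivIco (1 : ℝ) 0).measurable)
    measurableSet_Ico

lemma arc_volume (a b : ℝ) (ha : 0 ≤ a) (hb : b ≤ 1) :
    (volume : Measure UnitAddCircle) (arc a b) = ENNReal.ofReal (b - a) := by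
  rw [AddCircle.add_projection_respects_measure 1 0 (arc_measurable a b ha hb), ← Real.volume_Ico]
  have hae : ∀ᵐ y : ℝ, y ≠ 0 ∧ y ≠ 1 := by
    refine Filter.Eventually.and ?_ ?_ <;> simp [ae_iff]
  apply measure_congr
  filter_upwards [hae] with y hy
  apply propext
  change ((y : UnitAddCircle) ∈ arc a b ∧ y ∈ Set.Ioc (0 : ℝ) (0 + 1)) ↔ y ∈ Set.Ico a b
  rw [mem_arc a b ha hb]
  constructor
  · rintro ⟨h1, h2, h3⟩
    rw [zero_add] at h3
    rwa [Int.fract_eq_self.2 ⟨h2.le, lt_of_le_of_ne h3 hy.2⟩] at h1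
  · intro h
    have h0 : 0 ≤ y := ha.trans h.1
    have h1 : y < 1 := lt_of_lt_of_le h.2 hb
    rw [Int.fract_eq_self.2 ⟨h0, h1⟩]
    exact ⟨h, lt_of_le_of_ne h0 (Ne.symm hy.1), by linarith⟩

lemma emp_arc (u : ℕ → ℝ) (a b : ℝ) (ha : 0 ≤ a) (hb : b ≤ 1) (N : ℕ) :
    (emp u N (arc a b)).toReal = (cnt u a b (N + 1) : ℝ) / ((N + 1 : ℕ) : ℝ) := by
  unfold emp cnt
  rw [Measure.smul_apply, Measure.finsetSum_apply]
  simp_rw [Measure.dirac_apply' _ (arc_measurable a b ha hb), Set.indicator_apply,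
    mem_arc a b ha hb]
  rw [← Finset.sum_filter]
  simp only [Pi.one_apply, Finset.sum_const, nsmul_eq_mul, mul_one, smul_eq_mul,
    ENNReal.toReal_mul, ENNReal.toReal_inv, ENNReal.toReal_natCast]
  have : ((N : ENNReal) + 1).toReal = N + 1 := by
    rw [ENNReal.toReal_add (by finiteness) (by finiteness)]; simp
  rw [this]
  push_cast
  ring

lemma cnt_tendsto (u : ℕ → ℝ)
    (H : ∀ h : ℤ, h ≠ 0 → Tendsto
      (fun N : ℕ => (∑ n ∈ Finset.range N, ee (h * u n)) / (N : ℂ)) atTop (𝓝 0))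
    (a b : ℝ) (ha : 0 ≤ a) (hab : a < b) (hb : b ≤ 1) :
    Tendsto (fun N : ℕ => (cnt u a b N : ℝ) / N) atTop (𝓝 (b - a)) := by
  have hP : IsProbabilityMeasure (volume : Measure UnitAddCircle) := ⟨by simp⟩
  let μs : ℕ → ProbabilityMeasure UnitAddCircle := fun N => ⟨emp u N, emp_prob u N⟩
  let μ : ProbabilityMeasure UnitAddCircle := ⟨volume, hP⟩
  have hlim : Tendsto μs atTop (𝓝 μ) := by
    rw [ProbabilityMeasure.tendsto_iff_forall_integral_rclike_tendsto ℂ]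
    intro f
    exact emp_tendsto_integral u H f.toContinuousMap
  have h1 := ProbabilityMeasure.tendsto_measure_of_null_frontier_of_tendsto' hlim
    (E := arc a b) (arc_frontier a b hab)
  have h2 : Tendsto (fun N => (emp u N (arc a b)).toReal) atTop (𝓝 (b - a)) := by
    have h3 := (ENNReal.tendsto_toReal (measure_ne_top (volume : Measure UnitAddCircle) (arc a b))).comp h1
    rw [arc_volume a b ha hb, ENNReal.toReal_ofReal (by linarith)] at h3
    exact h3
  simp_rw [emp_arc u a b ha hb] at h2
  exact (tendsto_add_atTop_iff_nat (f := fun N : ℕ => (cnt u a b N : ℝ) / (N : ℝ)) 1).1 h2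

lemma isNormal_of_weylE (q : ℕ) (hq : 2 ≤ q) (x : ℝ) (hx : 0 ≤ x) (H : WeylE q x) :
    IsNormal q x := by
  rw [isNormal_iff q hq x hx]
  intro m _ A hA
  have hQ : (0 : ℝ) < (q : ℝ) ^ m := by positivity
  have hA' : (A : ℝ) + 1 ≤ (q : ℝ) ^ m := by exact_mod_cast hA
  have := cnt_tendsto (fun n => x * (q : ℝ) ^ n) H ((A : ℝ) / q ^ m) (((A : ℝ) + 1) / q ^ m)
    (by positivity) (by gcongr; linarith) ((div_le_one hQ).2 hA')
  have e : ((A : ℝ) + 1) / q ^ m - (A : ℝ) / q ^ m = ((q : ℝ) ^ m)⁻¹ := by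
    rw [← sub_div]; simp
  rwa [e] at this

lemma isNormal_iff_pow (q : ℕ) (hq : 2 ≤ q) (x : ℝ) (hx : 0 ≤ x) (r : ℕ) (hr : 0 < r) :
    IsNormal q x ↔ WeylE (q ^ r) x :=
  ⟨fun h => weylE_pow q hq x r hr (weylE_of_isNormal q hq x hx h),
    fun h => isNormal_of_weylE q hq x hx (weylE_of_pow q x r hr hq h)⟩

/-- **Schmidt, part 1**: if `p^r = q^s` for some positive integers `r, s`, then `x ∈ [0,1)` is
normal to base `p` iff it is normal to base `q`. -/
theorem schmidt_equivalent_bases (p q : ℕ) (hp : 2 ≤ p) (hq : 2 ≤ q)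
    (r s : ℕ) (hr : 0 < r) (hs : 0 < s) (hpq : p ^ r = q ^ s)
    (x : ℝ) (hx : x ∈ Set.Ico (0 : ℝ) 1) :
    IsNormal p x ↔ IsNormal q x := by
  rw [isNormal_iff_pow p hp x hx.1 r hr, isNormal_iff_pow q hq x hx.1 s hs, hpq]
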